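/- Let q be an odd prime power and d ∈ F_q with d ≠ 0. Set h = (4X⁴ − 12d²X² + 8d³X − d⁴)/(2X(X − d)(2X − d)), viewed as a map h : P¹(F_q) → P¹(F_q). Then the number of points b ∈ P¹(F_q) whose fiber h⁻¹(b) has exactly 4 elements equals (q+1)/4 if q ≡ 3 (mod 4), and equals (q−1)/4 if q ≡ 1 (mod 4). In particular, h is (3, (q+1)/4)-good when q ≡ 3 (mod 4) and (3, (q−1)/4)-good when q ≡ 1 (mod 4). -/

import Mathlib

open Polynomial Finset

/-- The map `P¹(F) → P¹(F)` induced by the rational function `f/g`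
(with `none` playing the role of `∞`). -/
def ratEval {F : Type*} [Field F] [DecidableEq F] (f g : Polynomial F) :
    Option F → Option F
  | none =>
      if g.natDegree < f.natDegree then none
      else if f.natDegree = g.natDegree then some (f.leadingCoeff / g.leadingCoeff)
      else some 0
  | some x => if g.eval x = 0 then none else some (f.eval x / g.eval x)

section helpers
variable {F : Type*} [Field F] [DecidableEq F]

lemma aux_none (h2 : (2 : F) ≠ 0) (d : F) :
    ratEval (C 4 * X ^ 4 - C (12 * d ^ 2) * X ^ 2 + C (8 * d ^ 3) * X - C (d ^ 4))
            (C 2 * X * (X - C d) * (C 2 * X - C d)) none = none := by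
  have h4 : (4 : F) ≠ 0 := by
    have : (4 : F) = 2 * 2 := by norm_num
    rw [this]; exact mul_ne_zero h2 h2
  have hf : (C 4 * X ^ 4 - C (12 * d ^ 2) * X ^ 2 + C (8 * d ^ 3) * X - C (d ^ 4) : F[X]).natDegree = 4 := by
    compute_degree!
  have hg : (C 2 * X * (X - C d) * (C 2 * X - C d) : F[X]).natDegree ≤ 3 := by
    compute_degree
  simp only [ratEval]
  rw [if_pos (by rw [hf]; omega)]

lemma aux_some (d a : F) :
    ratEval (C 4 * X ^ 4 - C (12 * d ^ 2) * X ^ 2 + C (8 * d ^ 3) * X - C (d ^ 4))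
            (C 2 * X * (X - C d) * (C 2 * X - C d)) (some a) =
    if 2 * a * (a - d) * (2 * a - d) = 0 then none
    else some ((4 * a ^ 4 - 12 * d ^ 2 * a ^ 2 + 8 * d ^ 3 * a - d ^ 4) /
      (2 * a * (a - d) * (2 * a - d))) := by
  simp only [ratEval]
  simp

lemma aux_inf (h2 : (2 : F) ≠ 0) (d : F) (x : Option F) :
    ratEval (C 4 * X ^ 4 - C (12 * d ^ 2) * X ^ 2 + C (8 * d ^ 3) * X - C (d ^ 4))
            (C 2 * X * (X - C d) * (C 2 * X - C d)) x = none ↔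
    x ∈ ({none, some 0, some d, some (d / 2)} : Finset (Option F)) := by
  cases x with
  | none => rw [aux_none h2]; simp
  | some a =>
    rw [aux_some]
    have : 2 * a = d ↔ a = d / 2 := by rw [eq_div_iff h2, mul_comm]
    simp [h2, sub_eq_zero, this, or_assoc]
    tauto

lemma aux_fin (h2 : (2 : F) ≠ 0) (d : F) (a : F) (ha : 2 * a * (a - d) * (2 * a - d) ≠ 0)
    (hd : d ≠ 0) (x : Option F) :
    ratEval (C 4 * X ^ 4 - C (12 * d ^ 2) * X ^ 2 + C (8 * d ^ 3) * X - C (d ^ 4))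
            (C 2 * X * (X - C d) * (C 2 * X - C d)) x =
    ratEval (C 4 * X ^ 4 - C (12 * d ^ 2) * X ^ 2 + C (8 * d ^ 3) * X - C (d ^ 4))
            (C 2 * X * (X - C d) * (C 2 * X - C d)) (some a) ↔
    x ∈ ({some a, some (d ^ 2 / (2 * (d - a))), some (d * (d - a) / (d - 2 * a)),
      some (d * (2 * a - d) / (2 * a))} : Finset (Option F)) := by
  have ha' := ha
  simp only [ne_eq, mul_eq_zero, not_or] at ha'
  obtain ⟨⟨⟨-, ha0⟩, ha1⟩, ha2⟩ := ha'
  have e1 : d - a ≠ 0 := fun h => ha1 (by linear_combination -h)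
  have e2 : d - 2 * a ≠ 0 := fun h => ha2 (by linear_combination -h)
  rw [aux_some d a, if_neg ha]
  cases x with
  | none => rw [aux_none h2]; simp
  | some x =>
    rw [aux_some]
    have key : (4 * x ^ 4 - 12 * d ^ 2 * x ^ 2 + 8 * d ^ 3 * x - d ^ 4) *
        (2 * a * (a - d) * (2 * a - d)) - (4 * a ^ 4 - 12 * d ^ 2 * a ^ 2 + 8 * d ^ 3 * a - d ^ 4) *
        (2 * x * (x - d) * (2 * x - d)) =
        2 * ((x - a) * (x * (2 * (d - a)) - d ^ 2) * (x * (d - 2 * a) - d * (d - a)) *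
          (x * (2 * a) - d * (2 * a - d))) := by ring
    have hx : x ∈ ({a, d ^ 2 / (2 * (d - a)), d * (d - a) / (d - 2 * a),
      d * (2 * a - d) / (2 * a)} : Finset F) ↔
      (4 * x ^ 4 - 12 * d ^ 2 * x ^ 2 + 8 * d ^ 3 * x - d ^ 4) *
        (2 * a * (a - d) * (2 * a - d)) = (4 * a ^ 4 - 12 * d ^ 2 * a ^ 2 + 8 * d ^ 3 * a - d ^ 4) *
        (2 * x * (x - d) * (2 * x - d)) := by
      rw [← sub_eq_zero (a := _ * (2 * a * (a - d) * (2 * a - d))), key]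
      simp only [mem_insert, mem_singleton, mul_eq_zero, h2, false_or, sub_eq_zero (a := x),
        or_assoc]
      rw [eq_div_iff (mul_ne_zero h2 e1), eq_div_iff e2, eq_div_iff (mul_ne_zero h2 ha0)]
      simp only [sub_eq_zero]
    have hx2 : some x ∈ ({some a, some (d ^ 2 / (2 * (d - a))), some (d * (d - a) / (d - 2 * a)),
      some (d * (2 * a - d) / (2 * a))} : Finset (Option F)) ↔
       x ∈ ({a, d ^ 2 / (2 * (d - a)), d * (d - a) / (d - 2 * a),
      d * (2 * a - d) / (2 * a)} : Finset F) := by simp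
    rw [hx2, hx]
    by_cases hgx : 2 * x * (x - d) * (2 * x - d) = 0
    · rw [if_pos hgx, hgx]
      simp only [reduceCtorEq, mul_zero, false_iff]
      apply mul_ne_zero _ ha
      simp only [mul_eq_zero, h2, false_or] at hgx
      have hd4 : d ^ 4 ≠ 0 := pow_ne_zero _ hd
      rcases hgx with (h | h) | h
      · intro h'; apply hd4; subst h; linear_combination -h'
      · intro h'; apply hd4
        obtain rfl : x = d := by linear_combination h
        linear_combination -h'
      · intro h'; apply hd4
        obtain rfl : d = 2 * x := by linear_combination -h
        linear_combination 4 * h'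
    · rw [if_neg hgx, Option.some_inj, div_eq_div_iff hgx ha]

lemma aux_quad_nz {d a : F} (hd : d ≠ 0) (h2 : (2 : F) ≠ 0)
    (h : 2 * a ^ 2 - 2 * a * d + d ^ 2 = 0) : 2 * a * (a - d) * (2 * a - d) ≠ 0 := by
  have hd2 : d ^ 2 ≠ 0 := pow_ne_zero _ hd
  refine mul_ne_zero (mul_ne_zero (mul_ne_zero h2 ?_) ?_) ?_ <;> intro h' <;> apply hd2
  · subst h'; linear_combination h
  · obtain rfl : a = d := by linear_combination h'
    linear_combination h
  · linear_combination 2 * h - (2 * a - d) * h'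

lemma aux_card4 {d a : F} (hd : d ≠ 0) (h2 : (2 : F) ≠ 0)
    (ha : 2 * a * (a - d) * (2 * a - d) ≠ 0)
    (h : 2 * a ^ 2 - 2 * a * d + d ^ 2 ≠ 0) :
    ({some a, some (d ^ 2 / (2 * (d - a))), some (d * (d - a) / (d - 2 * a)),
      some (d * (2 * a - d) / (2 * a))} : Finset (Option F)).card = 4 := by
  simp only [ne_eq, mul_eq_zero, not_or] at ha
  obtain ⟨⟨⟨-, ha0⟩, ha1⟩, ha2⟩ := ha
  have e1 : d - a ≠ 0 := fun h => ha1 (by linear_combination -h)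
  have e2 : d - 2 * a ≠ 0 := fun h => ha2 (by linear_combination -h)
  have f1 := mul_ne_zero h2 e1
  have f0 := mul_ne_zero h2 ha0
  have hdh := mul_ne_zero hd h
  rw [card_insert_of_notMem, card_insert_of_notMem, card_insert_of_notMem, card_singleton]
  · simp only [mem_singleton, Option.some_inj]
    rw [div_eq_div_iff e2 f0]
    intro h'; apply hdh; linear_combination h'
  · simp only [mem_insert, mem_singleton, Option.some_inj, not_or]
    rw [div_eq_div_iff f1 e2, div_eq_div_iff f1 f0]
    constructor
    · intro h'; apply hdh; linear_combination -h'
    · intro h'; apply mul_ne_zero h2 hdh; linear_combination h'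
  · simp only [mem_insert, mem_singleton, Option.some_inj, not_or]
    rw [eq_div_iff f1, eq_div_iff e2, eq_div_iff f0]
    refine ⟨?_, ?_, ?_⟩
    · intro h'; apply h; linear_combination -h'
    · intro h'; apply h; linear_combination -h'
    · intro h'; apply h; linear_combination h'

lemma aux_card1 {d a : F} (hd : d ≠ 0) (h2 : (2 : F) ≠ 0)
    (h : 2 * a ^ 2 - 2 * a * d + d ^ 2 = 0) :
    ({some a, some (d ^ 2 / (2 * (d - a))), some (d * (d - a) / (d - 2 * a)),
      some (d * (2 * a - d) / (2 * a))} : Finset (Option F)).card = 1 := by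
  have ha := aux_quad_nz hd h2 h
  simp only [ne_eq, mul_eq_zero, not_or] at ha
  obtain ⟨⟨⟨-, ha0⟩, ha1⟩, ha2⟩ := ha
  have e1 : d - a ≠ 0 := fun h => ha1 (by linear_combination -h)
  have e2 : d - 2 * a ≠ 0 := fun h => ha2 (by linear_combination -h)
  have f1 := mul_ne_zero h2 e1
  have f0 := mul_ne_zero h2 ha0
  have g1 : d ^ 2 / (2 * (d - a)) = a := by
    rw [div_eq_iff f1]; linear_combination h
  have g2 : d * (d - a) / (d - 2 * a) = a := by
    rw [div_eq_iff e2]; linear_combination h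
  have g3 : d * (2 * a - d) / (2 * a) = a := by
    rw [div_eq_iff f0]; linear_combination -h
  rw [g1, g2, g3]; simp

lemma aux_inf4 {d : F} (hd : d ≠ 0) (h2 : (2 : F) ≠ 0) :
    ({none, some 0, some d, some (d / 2)} : Finset (Option F)).card = 4 := by
  rw [card_insert_of_notMem, card_insert_of_notMem, card_insert_of_notMem, card_singleton]
  · simp only [mem_singleton, Option.some_inj]
    rw [eq_div_iff h2]
    intro h'; apply hd; linear_combination h'
  · have : d / 2 ≠ 0 := div_ne_zero hd h2
    simp [hd.symm, this.symm]
  · simp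

lemma aux_main [Fintype F] (h2 : (2 : F) ≠ 0) (d : F) (hd : d ≠ 0) :
    Fintype.card F + 1 = 4 * (Finset.univ.filter (fun b : Option F =>
        (Finset.univ.filter (fun x : Option F =>
          ratEval (C 4 * X ^ 4 - C (12 * d ^ 2) * X ^ 2 + C (8 * d ^ 3) * X - C (d ^ 4))
            (C 2 * X * (X - C d) * (C 2 * X - C d)) x = b)).card = 4)).card +
      (Finset.univ.filter (fun a : F => 2 * a ^ 2 - 2 * a * d + d ^ 2 = 0)).card := by
  set H := ratEval (C 4 * X ^ 4 - C (12 * d ^ 2) * X ^ 2 + C (8 * d ^ 3) * X - C (d ^ 4))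
            (C 2 * X * (X - C d) * (C 2 * X - C d)) with hH
  set T := Finset.univ.filter (fun b : Option F =>
        (Finset.univ.filter (fun x : Option F => H x = b)).card = 4) with hT
  set Z := Finset.univ.filter (fun a : F => 2 * a ^ 2 - 2 * a * d + d ^ 2 = 0) with hZ
  have hmem : ∀ x : Option F, H x ∈ T ↔ x ∉ Z.map Function.Embedding.some := by
    intro x
    have hinf : H x = none → (H x ∈ T) := by
      intro hx
      rw [hx, hT, mem_filter]
      refine ⟨mem_univ _, ?_⟩
      rw [← aux_inf4 hd h2]
      congr 1
      ext y
      rw [mem_filter, hH, aux_inf h2]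
      simp
    cases x with
    | none => simp [hinf (aux_none h2 d)]
    | some a =>
      have hz : some a ∈ Z.map Function.Embedding.some ↔ 2 * a ^ 2 - 2 * a * d + d ^ 2 = 0 := by
        simp [hZ]
      rw [hz]
      by_cases hg : 2 * a * (a - d) * (2 * a - d) = 0
      · have : H (some a) = none := by rw [hH, aux_some, if_pos hg]
        simp only [hinf this, true_iff]
        exact fun h => aux_quad_nz hd h2 h hg
      · have hfib : Finset.univ.filter (fun x : Option F => H x = H (some a)) =
          {some a, some (d ^ 2 / (2 * (d - a))), some (d * (d - a) / (d - 2 * a)),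
            some (d * (2 * a - d) / (2 * a))} := by
          ext y
          rw [mem_filter, hH, aux_fin h2 d a hg hd]
          simp
        rw [hT, mem_filter, hfib]
        simp only [mem_univ, true_and]
        constructor
        · intro h h'
          rw [aux_card1 hd h2 h'] at h
          omega
        · exact aux_card4 hd h2 hg
  have h1 : ((Z.map Function.Embedding.some)ᶜ).card = T.card * 4 := by
    rw [card_eq_sum_card_fiberwise (f := H) (t := T)]
    · apply sum_const_nat
      intro b hb
      have hb' := (mem_filter.mp hb).2
      rw [← hb']
      congr 1
      ext y
      simp only [mem_filter, mem_compl, mem_univ, true_and, ← hmem]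
      constructor
      · exact fun h => h.2
      · exact fun h => ⟨h ▸ hb, h⟩
    · intro x hx
      simp only [mem_coe, mem_compl] at hx ⊢
      exact (hmem x).2 hx
  have h3 := card_compl_add_card (Z.map Function.Embedding.some)
  rw [h1, card_map, Fintype.card_option] at h3
  omega

end helpers

/-- Let `q` be odd, `d ∈ F_q*`, and consider
`h = (4X⁴ - 12d²X² + 8d³X - d⁴)/(2X(X - d)(2X - d))` as a map `P¹(F_q) → P¹(F_q)`.
The number of `b ∈ P¹(F_q)` whose fiber `h⁻¹(b)` has exactly `4` elements equals
`(q+1)/4` if `q ≡ 3 (mod 4)` and `(q-1)/4` if `q ≡ 1 (mod 4)`; in particular `h`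
is `(3,l)`-good with the corresponding `l`. -/
theorem stmt15 {F : Type*} [Field F] [Fintype F] [DecidableEq F]
    (hodd : Odd (Fintype.card F)) (d : F) (hd : d ≠ 0) :
    (Fintype.card F % 4 = 3 →
      (Finset.univ.filter (fun b : Option F =>
        (Finset.univ.filter (fun x : Option F =>
          ratEval (C 4 * X ^ 4 - C (12 * d ^ 2) * X ^ 2 + C (8 * d ^ 3) * X - C (d ^ 4))
            (C 2 * X * (X - C d) * (C 2 * X - C d)) x = b)).card = 4)).card
        = (Fintype.card F + 1) / 4) ∧
    (Fintype.card F % 4 = 1 →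
      (Finset.univ.filter (fun b : Option F =>
        (Finset.univ.filter (fun x : Option F =>
          ratEval (C 4 * X ^ 4 - C (12 * d ^ 2) * X ^ 2 + C (8 * d ^ 3) * X - C (d ^ 4))
            (C 2 * X * (X - C d) * (C 2 * X - C d)) x = b)).card = 4)).card
        = (Fintype.card F - 1) / 4) := by
  have h2 : (2 : F) ≠ 0 := by
    intro h
    have hc : ringChar F = 2 := by
      apply CharP.ringChar_of_prime_eq_zero Nat.prime_two
      exact_mod_cast h
    have := FiniteField.even_card_of_char_two hc
    rw [Nat.odd_iff] at hodd
    omega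
  have key := aux_main h2 d hd
  have hsq := FiniteField.isSquare_neg_one_iff (F := F)
  constructor
  · intro h3
    have hz : (Finset.univ.filter (fun a : F => 2 * a ^ 2 - 2 * a * d + d ^ 2 = 0)).card = 0 := by
      rw [card_eq_zero, filter_eq_empty_iff]
      intro a _ ha
      refine (hsq.1 ⟨(2 * a - d) / d, ?_⟩) h3
      field_simp
      linear_combination -2 * ha
    rw [hz] at key
    omega
  · intro h1
    obtain ⟨i, hi⟩ := hsq.2 (by omega)
    have hz : (Finset.univ.filter (fun a : F => 2 * a ^ 2 - 2 * a * d + d ^ 2 = 0)).card = 2 := by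
      rw [card_eq_two]
      refine ⟨d * (1 + i) / 2, d * (1 - i) / 2, ?_, ?_⟩
      · intro h
        have hi0 : i ≠ 0 := by rintro rfl; simp at hi
        apply mul_ne_zero (mul_ne_zero h2 hd) hi0
        rw [div_left_inj' h2] at h
        linear_combination h
      · ext a
        simp only [mem_filter, mem_univ, true_and, mem_insert, mem_singleton]
        rw [eq_div_iff h2, eq_div_iff h2, ← sub_eq_zero (a := a * 2), ← sub_eq_zero (a := a * 2) (b := d * (1 - i)), ← mul_eq_zero]
        have : (a * 2 - d * (1 + i)) * (a * 2 - d * (1 - i)) = 2 * (2 * a ^ 2 - 2 * a * d + d ^ 2) := by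
          linear_combination d ^ 2 * hi
        rw [this]
        simp [h2]
    rw [hz] at key
    omega
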